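/- arXiv:math/0506046 — 7 statements merged into one kernel-verified Lean document; each statement's English description precedes it below -/
import Mathlib

section
/- Let F be a field of characteristic zero, n ≥ 2, and m = 2q an even integer with q ≥ 1. Inside M_{n,m}(F)^{(+)}, let A = osp(n,q) (with the n×n block in the even rows/columns and the m×m block in the odd rows/columns), and let B be the set of all (n+m)×(n+m) matrices X such that every entry of the n-th row of X is zero and X_{i,n−1} = X_{i,n} for every index i ≠ n. Then A and B are subsuperalgebras of M_{n,m}(F)^{(+)}, B is isomorphic as a superalgebra to M_{n−1,m}(F)^{(+)}, and A + B = M_{n,m}(F)^{(+)} (as vector spaces). -/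
open Matrix

namespace SJ

section SuperDefs

variable {F : Type*} [Field F] {J : Type*} [AddCommGroup J] [Module F J]

/-- A graded subspace: `A = (A ∩ J₀) ⊕ (A ∩ J₁)`. -/
def IsGradedG (ev od : Submodule F J) (A : Submodule F J) : Prop :=
  A = (A ⊓ ev) ⊔ (A ⊓ od)

/-- A subsuperalgebra: a graded subspace closed under the product. -/
def IsSubalgG (mul : J → J → J) (ev od : Submodule F J) (A : Submodule F J) : Prop :=
  IsGradedG ev od A ∧ ∀ x ∈ A, ∀ y ∈ A, mul x y ∈ A

/-- Nontrivial: `A ∩ J₁ ≠ {0}`. -/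
def NontrivG (od : Submodule F J) (A : Submodule F J) : Prop := A ⊓ od ≠ ⊥

/-- Simple: `A∘A ≠ 0` and the only graded subspaces `I ⊆ A` with `A∘I ⊆ I` are `0` and `A`. -/
def IsSimpleG (mul : J → J → J) (ev od : Submodule F J) (A : Submodule F J) : Prop :=
  (∃ x ∈ A, ∃ y ∈ A, mul x y ≠ 0) ∧
  ∀ I : Submodule F J, I ≤ A → IsGradedG ev od I →
    (∀ x ∈ A, ∀ y ∈ I, mul x y ∈ I) → I = ⊥ ∨ I = A

/-- An isomorphism of superalgebras: an F-linear bijection mapping even part onto even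
part, odd part onto odd part, and preserving the product. -/
def SuperIsoG {J₂ : Type*} [AddCommGroup J₂] [Module F J₂]
    (mul₁ : J → J → J) (ev₁ od₁ : Submodule F J)
    (mul₂ : J₂ → J₂ → J₂) (ev₂ od₂ : Submodule F J₂)
    (A : Submodule F J) (B : Submodule F J₂) : Prop :=
  ∃ e : A ≃ₗ[F] B,
    (∀ x : A, (x : J) ∈ ev₁ ↔ (e x : J₂) ∈ ev₂) ∧
    (∀ x : A, (x : J) ∈ od₁ ↔ (e x : J₂) ∈ od₂) ∧
    ∀ x y z : A, mul₁ x y = (z : J) → mul₂ (e x) (e y) = (e z : J₂)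

end SuperDefs

/-- The space of (n+m)×(n+m) matrices, indices split into even (`inl`) and odd (`inr`) ones. -/
abbrev MJ (F : Type*) [Field F] (n m : ℕ) :=
  Matrix (Fin n ⊕ Fin m) (Fin n ⊕ Fin m) F

/-- Parity of an index. -/
def pty {n m : ℕ} : Fin n ⊕ Fin m → Bool := Sum.elim (fun _ => false) (fun _ => true)

variable (F : Type*) [Field F]

/-- The odd component of a matrix (block-antidiagonal part). -/
def oddPart {n m : ℕ} (X : MJ F n m) : MJ F n m :=
  Matrix.of fun i j => if pty i = pty j then 0 else X i j

/-- The even component of a matrix (block-diagonal part). -/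
def evenPart {n m : ℕ} (X : MJ F n m) : MJ F n m :=
  Matrix.of fun i j => if pty i = pty j then X i j else 0

variable {F}

/-- The super-Jordan product on `M_{n,m}(F)^{(+)}`:  `x∘y = (xy+yx)/2` when `x` or `y` is
even and `x∘y = (xy−yx)/2` when both are odd, extended bilinearly.  (For arbitrary
matrices this bilinear extension equals `(xy+yx)/2 − y₁x₁` where `x₁, y₁` are the odd
components.) -/
def jmul {n m : ℕ} (X Y : MJ F n m) : MJ F n m :=
  (2 : F)⁻¹ • (X * Y + Y * X) - oddPart F Y * oddPart F X

variable (F)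

/-- The even part `J₀` of `M_{n,m}(F)^{(+)}`: block-diagonal matrices. -/
def evenSub (n m : ℕ) : Submodule F (MJ F n m) where
  carrier := {X | ∀ i j, pty i ≠ pty j → X i j = 0}
  zero_mem' := by intro i j _; simp
  add_mem' := by
    intro a b ha hb i j h
    simp only [Matrix.add_apply, ha i j h, hb i j h, add_zero]
  smul_mem' := by
    intro c a ha i j h
    simp only [Matrix.smul_apply, ha i j h, smul_zero]

/-- The odd part `J₁` of `M_{n,m}(F)^{(+)}`: block-antidiagonal matrices. -/
def oddSub (n m : ℕ) : Submodule F (MJ F n m) where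
  carrier := {X | ∀ i j, pty i = pty j → X i j = 0}
  zero_mem' := by intro i j _; simp
  add_mem' := by
    intro a b ha hb i j h
    simp only [Matrix.add_apply, ha i j h, hb i j h, add_zero]
  smul_mem' := by
    intro c a ha i j h
    simp only [Matrix.smul_apply, ha i j h, smul_zero]

/-- Statements about `M_{n,m}(F)^{(+)}` specialized from the generic definitions. -/
abbrev IsGraded {n m : ℕ} (A : Submodule F (MJ F n m)) : Prop :=
  IsGradedG (evenSub F n m) (oddSub F n m) A

abbrev IsSubalg {n m : ℕ} (A : Submodule F (MJ F n m)) : Prop :=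
  IsSubalgG jmul (evenSub F n m) (oddSub F n m) A

abbrev Nontriv {n m : ℕ} (A : Submodule F (MJ F n m)) : Prop :=
  NontrivG (oddSub F n m) A

abbrev IsSimple {n m : ℕ} (A : Submodule F (MJ F n m)) : Prop :=
  IsSimpleG jmul (evenSub F n m) (oddSub F n m) A

abbrev SuperIso {n₁ m₁ n₂ m₂ : ℕ}
    (A : Submodule F (MJ F n₁ m₁)) (B : Submodule F (MJ F n₂ m₂)) : Prop :=
  SuperIsoG jmul (evenSub F n₁ m₁) (oddSub F n₁ m₁)
    jmul (evenSub F n₂ m₂) (oddSub F n₂ m₂) A B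

/-- The standard symplectic matrix `S = [[0, I_q],[−I_q, 0]]` of size `2q`. -/
def SMat (q : ℕ) : Matrix (Fin (2 * q)) (Fin (2 * q)) F :=
  Matrix.of fun i j =>
    if (j : ℕ) = (i : ℕ) + q then (1 : F) else if (i : ℕ) = (j : ℕ) + q then -1 else 0

/-- `osp(p,q)`: block matrices `[[A, C],[S⁻¹Cᵀ, D]]` inside `M_{p,2q}(F)^{(+)}` with
`A` symmetric, `C` arbitrary and `Dᵀ S = S D`.  The condition on the lower-left block is
recorded in the equivalent form `S · C₂₁ = C₁₂ᵀ`. -/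
def ospSub (p q : ℕ) : Submodule F (MJ F p (2 * q)) where
  carrier := {X | (X.toBlocks₁₁)ᵀ = X.toBlocks₁₁ ∧
    SMat F q * X.toBlocks₂₁ = (X.toBlocks₁₂)ᵀ ∧
    (X.toBlocks₂₂)ᵀ * SMat F q = SMat F q * X.toBlocks₂₂}
  zero_mem' := by
    refine ⟨?_, ?_, ?_⟩ <;> ext i j <;>
      simp [Matrix.toBlocks₁₁, Matrix.toBlocks₁₂, Matrix.toBlocks₂₁, Matrix.toBlocks₂₂,
        Matrix.mul_apply]
  add_mem' := by
    rintro a b ⟨ha1, ha2, ha3⟩ ⟨hb1, hb2, hb3⟩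
    have e11 : (a + b).toBlocks₁₁ = a.toBlocks₁₁ + b.toBlocks₁₁ := rfl
    have e12 : (a + b).toBlocks₁₂ = a.toBlocks₁₂ + b.toBlocks₁₂ := rfl
    have e21 : (a + b).toBlocks₂₁ = a.toBlocks₂₁ + b.toBlocks₂₁ := rfl
    have e22 : (a + b).toBlocks₂₂ = a.toBlocks₂₂ + b.toBlocks₂₂ := rfl
    refine ⟨?_, ?_, ?_⟩
    · rw [e11, Matrix.transpose_add, ha1, hb1]
    · rw [e21, e12, Matrix.mul_add, Matrix.transpose_add, ha2, hb2]
    · rw [e22, Matrix.transpose_add, Matrix.add_mul, Matrix.mul_add, ha3, hb3]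
  smul_mem' := by
    rintro c a ⟨ha1, ha2, ha3⟩
    have e11 : (c • a).toBlocks₁₁ = c • a.toBlocks₁₁ := rfl
    have e12 : (c • a).toBlocks₁₂ = c • a.toBlocks₁₂ := rfl
    have e21 : (c • a).toBlocks₂₁ = c • a.toBlocks₂₁ := rfl
    have e22 : (c • a).toBlocks₂₂ = c • a.toBlocks₂₂ := rfl
    refine ⟨?_, ?_, ?_⟩
    · rw [e11, Matrix.transpose_smul, ha1]
    · rw [e21, e12, Matrix.mul_smul, Matrix.transpose_smul, ha2]
    · rw [e22, Matrix.transpose_smul, Matrix.smul_mul, Matrix.mul_smul, ha3]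

/-- `Q(n)`: matrices `[[A, B],[B, A]]` inside `M_{n,n}(F)^{(+)}`. -/
def QSub (n : ℕ) : Submodule F (MJ F n n) where
  carrier := {X | (∀ i j, X (Sum.inr i) (Sum.inr j) = X (Sum.inl i) (Sum.inl j)) ∧
    (∀ i j, X (Sum.inr i) (Sum.inl j) = X (Sum.inl i) (Sum.inr j))}
  zero_mem' := by constructor <;> intro i j <;> simp
  add_mem' := by
    rintro a b ⟨ha1, ha2⟩ ⟨hb1, hb2⟩
    constructor <;> intro i j <;>
      simp only [Matrix.add_apply, ha1 i j, ha2 i j, hb1 i j, hb2 i j]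
  smul_mem' := by
    rintro c a ⟨ha1, ha2⟩
    constructor <;> intro i j <;>
      simp only [Matrix.smul_apply, ha1 i j, ha2 i j]

/-- `P(n)`: matrices `[[A, B],[C, Aᵀ]]` with `B` symmetric and `C` skew-symmetric,
inside `M_{n,n}(F)^{(+)}`. -/
def PSub (n : ℕ) : Submodule F (MJ F n n) where
  carrier := {X | (∀ i j, X (Sum.inr i) (Sum.inr j) = X (Sum.inl j) (Sum.inl i)) ∧
    (∀ i j, X (Sum.inl i) (Sum.inr j) = X (Sum.inl j) (Sum.inr i)) ∧
    (∀ i j, X (Sum.inr i) (Sum.inl j) = - X (Sum.inr j) (Sum.inl i))}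
  zero_mem' := by refine ⟨?_, ?_, ?_⟩ <;> intro i j <;> simp
  add_mem' := by
    rintro a b ⟨ha1, ha2, ha3⟩ ⟨hb1, hb2, hb3⟩
    refine ⟨?_, ?_, ?_⟩ <;> intro i j <;>
      simp only [Matrix.add_apply, ha1 i j, ha2 i j, ha3 i j, hb1 i j, hb2 i j, hb3 i j] <;>
      ring
  smul_mem' := by
    rintro c a ⟨ha1, ha2, ha3⟩
    refine ⟨?_, ?_, ?_⟩ <;> intro i j <;>
      simp only [Matrix.smul_apply, ha1 i j, ha2 i j, ha3 i j, smul_neg]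


section Helpers

variable {F}

lemma evenPart_eq {n m : ℕ} (X : MJ F n m) : X = evenPart F X + oddPart F X := by
  ext i j
  simp only [evenPart, oddPart, Matrix.add_apply, Matrix.of_apply]
  split_ifs <;> simp

lemma graded_of_odd {n m : ℕ} (A : Submodule F (MJ F n m))
    (h : ∀ x ∈ A, oddPart F x ∈ A) : IsGraded F A := by
  refine le_antisymm ?_ (sup_le inf_le_left inf_le_left)
  intro x hx
  have ho := h x hx
  have he : evenPart F x ∈ A := by
    have : evenPart F x = x - oddPart F x := by
      conv_rhs => enter [1]; rw [evenPart_eq x]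
      simp
    rw [this]; exact A.sub_mem hx ho
  rw [evenPart_eq x]
  refine Submodule.add_mem_sup ⟨he, ?_⟩ ⟨ho, ?_⟩
  · intro i j hij; simp [evenPart, hij]
  · intro i j hij; simp [oddPart, hij]

lemma SMat_transpose (q : ℕ) : (SMat F q)ᵀ = - SMat F q := by
  ext i j
  simp only [SMat, Matrix.transpose_apply, Matrix.of_apply, Matrix.neg_apply]
  have hi := i.2
  have hj := j.2
  split_ifs <;> first | (exfalso; omega) | simp

lemma SMat_sq (q : ℕ) : SMat F q * SMat F q = -1 := by
  ext i j
  have hi := i.2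
  have hj := j.2
  rw [Matrix.mul_apply]
  by_cases h : (i : ℕ) < q
  · rw [Finset.sum_eq_single (⟨i + q, by omega⟩ : Fin (2 * q))]
    · simp only [SMat, Matrix.of_apply, Matrix.neg_apply, Matrix.one_apply, Fin.ext_iff]
      split_ifs <;> first | (exfalso; omega) | simp
    · intro b _ hb
      have hb' : (b : ℕ) ≠ i + q := fun h => hb (Fin.ext h)
      simp only [SMat, Matrix.of_apply]
      rw [if_neg hb', if_neg (by omega), zero_mul]
    · intro h; exact absurd (Finset.mem_univ _) h
  · rw [Finset.sum_eq_single (⟨i - q, by omega⟩ : Fin (2 * q))]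
    · simp only [SMat, Matrix.of_apply, Matrix.neg_apply, Matrix.one_apply, Fin.ext_iff]
      split_ifs <;> first | (exfalso; omega) | simp
    · intro b _ hb
      have hb' : (b : ℕ) ≠ i - q := fun h => hb (Fin.ext h)
      have hb2 := b.2
      simp only [SMat, Matrix.of_apply]
      rw [if_neg (by omega), if_neg (by omega), zero_mul]
    · intro h; exact absurd (Finset.mem_univ _) h

lemma oddPart_fromBlocks {n m : ℕ} (A : Matrix (Fin n) (Fin n) F) (C : Matrix (Fin n) (Fin m) F)
    (E : Matrix (Fin m) (Fin n) F) (D : Matrix (Fin m) (Fin m) F) :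
    oddPart F (fromBlocks A C E D) = fromBlocks 0 C E 0 := by
  ext i j
  rcases i with i | i <;> rcases j with j | j <;> simp [oddPart, pty]

lemma mem_osp {p q : ℕ} (A : Matrix (Fin p) (Fin p) F) (C : Matrix (Fin p) (Fin (2 * q)) F)
    (E : Matrix (Fin (2 * q)) (Fin p) F) (D : Matrix (Fin (2 * q)) (Fin (2 * q)) F) :
    fromBlocks A C E D ∈ ospSub F p q ↔
      Aᵀ = A ∧ SMat F q * E = Cᵀ ∧ Dᵀ * SMat F q = SMat F q * D := by
  change (_ ∧ _ ∧ _) ↔ _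
  simp

lemma osp_odd {p q : ℕ} (X : MJ F p (2 * q)) (hX : X ∈ ospSub F p q) :
    oddPart F X ∈ ospSub F p q := by
  rw [← fromBlocks_toBlocks X] at hX ⊢
  rw [mem_osp] at hX
  rw [oddPart_fromBlocks, mem_osp]
  refine ⟨by simp, hX.2.1, by simp⟩

lemma osp_mul [CharZero F] {p q : ℕ} (X Y : MJ F p (2 * q)) (hX : X ∈ ospSub F p q)
    (hY : Y ∈ ospSub F p q) : jmul X Y ∈ ospSub F p q := by
  have key : jmul X Y =
      (2 : F)⁻¹ • (X * Y + Y * X - (2 : F) • (oddPart F Y * oddPart F X)) := by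
    rw [smul_sub, smul_smul]; simp [jmul]
  rw [key]
  refine Submodule.smul_mem _ _ ?_
  rw [← fromBlocks_toBlocks X] at hX ⊢
  rw [← fromBlocks_toBlocks Y] at hY ⊢
  generalize X.toBlocks₁₁ = A, X.toBlocks₁₂ = C, X.toBlocks₂₁ = E, X.toBlocks₂₂ = D at *
  generalize Y.toBlocks₁₁ = A', Y.toBlocks₁₂ = C', Y.toBlocks₂₁ = E', Y.toBlocks₂₂ = D' at *
  rw [mem_osp] at hX hY
  obtain ⟨a1, a2, a3⟩ := hX
  obtain ⟨b1, b2, b3⟩ := hY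
  have hS := SMat_transpose (F := F) q
  rw [oddPart_fromBlocks, oddPart_fromBlocks]
  simp only [fromBlocks_multiply, fromBlocks_add, fromBlocks_smul, sub_eq_add_neg, fromBlocks_neg]
  rw [mem_osp]
  generalize SMat F q = S at *
  have a2' : C = -(Eᵀ * S) := by
    rw [← Matrix.transpose_transpose C, ← a2, Matrix.transpose_mul, hS, Matrix.mul_neg]
  have b2' : C' = -(E'ᵀ * S) := by
    rw [← Matrix.transpose_transpose C', ← b2, Matrix.transpose_mul, hS, Matrix.mul_neg]
  have a3' : ∀ {r : ℕ} (Z : Matrix (Fin (2 * q)) (Fin r) F), Dᵀ * (S * Z) = S * (D * Z) := by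
    intro r Z; rw [← Matrix.mul_assoc, a3, Matrix.mul_assoc]
  have b3' : ∀ {r : ℕ} (Z : Matrix (Fin (2 * q)) (Fin r) F), D'ᵀ * (S * Z) = S * (D' * Z) := by
    intro r Z; rw [← Matrix.mul_assoc, b3, Matrix.mul_assoc]
  clear a2 b2
  subst a2' b2'
  refine ⟨?_, ?_, ?_⟩ <;>
    simp only [Matrix.transpose_add, Matrix.transpose_neg, Matrix.transpose_smul, two_smul,
      Matrix.transpose_mul, Matrix.transpose_transpose, Matrix.mul_add, Matrix.add_mul,
      Matrix.mul_neg, Matrix.neg_mul, Matrix.mul_assoc, Matrix.zero_mul, Matrix.mul_zero,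
      Matrix.transpose_zero, a1, b1, a3, b3, a3', b3', hS, neg_neg, neg_add_rev, add_zero,
      zero_add, neg_zero] <;> abel

end Helpers

section HelpersB

variable {F}

variable (F) in
def BSub (k m : ℕ) : Submodule F (MJ F (k + 2) m) where
  carrier := {X | (∀ j, X (Sum.inl (Fin.last (k + 1))) j = 0) ∧
    ∀ i, X i (Sum.inl (Fin.last k).castSucc) = X i (Sum.inl (Fin.last (k + 1)))}
  zero_mem' := by constructor <;> intro i <;> simp
  add_mem' := by
    rintro a b ⟨ha1, ha2⟩ ⟨hb1, hb2⟩
    constructor <;> intro i <;> simp only [Matrix.add_apply, ha1, ha2, hb1, hb2, add_zero]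
  smul_mem' := by
    rintro c a ⟨ha1, ha2⟩
    constructor <;> intro i <;> simp only [Matrix.smul_apply, ha1, ha2, smul_zero]

lemma B_odd {k m : ℕ} (X : MJ F (k + 2) m) (h : X ∈ BSub F k m) : oddPart F X ∈ BSub F k m := by
  refine ⟨fun j => ?_, fun i => ?_⟩
  · simp [oddPart, h.1]
  · simp only [oddPart, Matrix.of_apply, h.2]
    rfl

lemma B_mul {k m : ℕ} (X Y : MJ F (k + 2) m) (hX : X ∈ BSub F k m) (hY : Y ∈ BSub F k m) :
    X * Y ∈ BSub F k m := by
  refine ⟨fun j => ?_, fun i => ?_⟩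
  · simp [Matrix.mul_apply, hX.1]
  · simp only [Matrix.mul_apply, hY.2]

lemma B_jmul {k m : ℕ} (X Y : MJ F (k + 2) m) (hX : X ∈ BSub F k m) (hY : Y ∈ BSub F k m) :
    jmul X Y ∈ BSub F k m :=
  Submodule.sub_mem _ (Submodule.smul_mem _ _ (Submodule.add_mem _ (B_mul _ _ hX hY)
    (B_mul _ _ hY hX))) (B_mul _ _ (B_odd _ hY) (B_odd _ hX))

def emb {k m : ℕ} : Fin (k + 1) ⊕ Fin m → Fin (k + 2) ⊕ Fin m := Sum.map Fin.castSucc id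

lemma pty_emb {k m : ℕ} (i : Fin (k + 1) ⊕ Fin m) : pty (emb i) = pty i := by
  cases i <;> rfl

def ret {k m : ℕ} : Fin (k + 2) ⊕ Fin m → Fin (k + 1) ⊕ Fin m :=
  Sum.map (Fin.lastCases (Fin.last k) id) id

lemma ret_emb {k m : ℕ} (i : Fin (k + 1) ⊕ Fin m) : ret (emb i) = i := by
  cases i <;> simp [ret, emb]

lemma ret_last {k m : ℕ} : ret (Sum.inl (Fin.last (k + 1)) : Fin (k + 2) ⊕ Fin m)
    = Sum.inl (Fin.last k) := by
  simp [ret]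

lemma emb_cases {k m : ℕ} (i : Fin (k + 2) ⊕ Fin m) :
    i = Sum.inl (Fin.last (k + 1)) ∨ ∃ j, i = emb j := by
  rcases i with i | i
  · induction i using Fin.lastCases with
    | last => left; rfl
    | cast i => right; exact ⟨Sum.inl i, rfl⟩
  · right; exact ⟨Sum.inr i, rfl⟩

lemma emb_ne {k m : ℕ} (j : Fin (k + 1) ⊕ Fin m) : emb j ≠ Sum.inl (Fin.last (k + 1)) := by
  rcases j with j | j
  · intro h
    have := Sum.inl.inj h
    exact absurd this (Fin.castSucc_lt_last j).ne
  · simp [emb]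

lemma sub_mul' {k m : ℕ} (X Y : MJ F (k + 2) m) (hY : Y ∈ BSub F k m) :
    (X * Y).submatrix emb emb = X.submatrix emb emb * Y.submatrix emb emb := by
  ext i j
  simp only [Matrix.submatrix_apply, Matrix.mul_apply, Fintype.sum_sum_type]
  rw [Fin.sum_univ_castSucc, hY.1, mul_zero, add_zero]
  rfl

lemma sub_odd {k m : ℕ} (X : MJ F (k + 2) m) :
    (oddPart F X).submatrix emb emb = oddPart F (X.submatrix emb emb) := by
  ext i j
  simp [oddPart, pty_emb]

lemma sub_jmul {k m : ℕ} (X Y : MJ F (k + 2) m) (hX : X ∈ BSub F k m) (hY : Y ∈ BSub F k m) :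
    (jmul X Y).submatrix emb emb = jmul (X.submatrix emb emb) (Y.submatrix emb emb) := by
  unfold jmul
  rw [← sub_odd, ← sub_odd, ← sub_mul' _ _ hY, ← sub_mul' _ _ hX, ← sub_mul' _ _ (B_odd _ hX)]
  rfl

def BEquiv (k m : ℕ) : BSub F k m ≃ₗ[F] (⊤ : Submodule F (MJ F (k + 1) m)) where
  toFun X := ⟨X.1.submatrix emb emb, trivial⟩
  map_add' _ _ := rfl
  map_smul' _ _ := rfl
  invFun Y := ⟨Matrix.of fun i j =>
      if i = Sum.inl (Fin.last (k + 1)) then 0 else Y.1 (ret i) (ret j), by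
    refine ⟨fun j => by simp, fun i => ?_⟩
    have : (Sum.inl (Fin.last k).castSucc : Fin (k + 2) ⊕ Fin m) = emb (Sum.inl (Fin.last k)) := rfl
    simp only [Matrix.of_apply, ret_last, this, ret_emb]⟩
  left_inv X := by
    apply Subtype.ext
    ext i j
    simp only [Matrix.of_apply, Matrix.submatrix_apply]
    rcases emb_cases i with rfl | ⟨i, rfl⟩
    · simp [X.2.1]
    · rw [if_neg (emb_ne i), ret_emb]
      rcases emb_cases j with rfl | ⟨j, rfl⟩
      · rw [ret_last]; exact X.2.2 _
      · rw [ret_emb]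
  right_inv Y := by
    apply Subtype.ext
    ext i j
    simp [emb_ne, ret_emb]

lemma B_iso (k m : ℕ) : SuperIso F (BSub F k m) (⊤ : Submodule F (MJ F (k + 1) m)) := by
  refine ⟨BEquiv k m, ?_, ?_, ?_⟩
  · intro X
    constructor
    · intro h i j hij
      exact h _ _ (by rwa [pty_emb, pty_emb])
    · intro h i j hij
      rcases emb_cases i with rfl | ⟨i, rfl⟩
      · exact X.2.1 _
      · rcases emb_cases j with rfl | ⟨j, rfl⟩
        · rw [← X.2.2]
          exact h i (Sum.inl (Fin.last k)) (by rw [pty_emb] at hij; exact hij)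
        · exact h i j (by rwa [pty_emb, pty_emb] at hij)
  · intro X
    constructor
    · intro h i j hij
      exact h _ _ (by rwa [pty_emb, pty_emb])
    · intro h i j hij
      rcases emb_cases i with rfl | ⟨i, rfl⟩
      · exact X.2.1 _
      · rcases emb_cases j with rfl | ⟨j, rfl⟩
        · rw [← X.2.2]
          exact h i (Sum.inl (Fin.last k)) (by rw [pty_emb] at hij; exact hij)
        · exact h i j (by rwa [pty_emb, pty_emb] at hij)
  · intro x y z h
    change jmul (x.1.submatrix emb emb) (y.1.submatrix emb emb) = z.1.submatrix emb emb
    rw [← sub_jmul _ _ x.2 y.2, h]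

lemma sum_top (k q : ℕ) : ospSub F (k + 2) q ⊔ BSub F k (2 * q) = ⊤ := by
  rw [eq_top_iff]
  intro X _
  let l : Fin (k + 2) := Fin.last (k + 1)
  let c : Fin (k + 2) := (Fin.last k).castSucc
  have hcl : c ≠ l := (Fin.castSucc_lt_last _).ne
  let w : Fin (2 * q) → F := fun i => X (Sum.inl l) (Sum.inr i)
  let u : Fin (2 * q) → F := -(SMat F q *ᵥ w)
  let v : Fin (k + 2) → F := fun i => X (Sum.inl i) (Sum.inl c) - X (Sum.inl i) (Sum.inl l)
    + X (Sum.inl l) (Sum.inl i)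
  let A : Matrix (Fin (k + 2)) (Fin (k + 2)) F := Matrix.of fun i j =>
    if i = l then X (Sum.inl l) (Sum.inl j) else if j = l then X (Sum.inl l) (Sum.inl i)
    else if i = c then v j else if j = c then v i else 0
  let E : Matrix (Fin (2 * q)) (Fin (k + 2)) F := Matrix.of fun i j =>
    if j = l then u i else if j = c then X (Sum.inr i) (Sum.inl c) - X (Sum.inr i) (Sum.inl l) + u i
    else 0
  have hA : Aᵀ = A := by
    ext i j
    simp only [A, Matrix.transpose_apply, Matrix.of_apply]
    split_ifs <;> simp_all
  have hu : SMat F q *ᵥ u = w := by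
    simp only [u, Matrix.mulVec_neg, Matrix.mulVec_mulVec, SMat_sq, Matrix.neg_mulVec,
      Matrix.one_mulVec, neg_neg]
  let a : MJ F (k + 2) (2 * q) := fromBlocks A (SMat F q * E)ᵀ E 0
  have ha : a ∈ ospSub F (k + 2) q := by
    rw [mem_osp]; exact ⟨hA, by simp, by simp⟩
  have hb : X - a ∈ BSub F k (2 * q) := by
    refine ⟨?_, ?_⟩
    · rintro (j | j)
      · simp [a, A, l]
      · have : (SMat F q * E) j l = w j := by
          rw [← hu]
          simp [Matrix.mul_apply, Matrix.mulVec, dotProduct, E]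
        simp only [a, Matrix.sub_apply, fromBlocks_apply₁₂, Matrix.transpose_apply]
        exact sub_eq_zero.2 this.symm
    · rintro (i | i)
      · change X (Sum.inl i) (Sum.inl c) - A i c = X (Sum.inl i) (Sum.inl l) - A i l
        by_cases h : i = l
        · subst h; simp [A]
        · by_cases h2 : i = c
          · subst h2; simp [A, hcl, v]; ring
          · simp [A, hcl, h, h2, v]; ring
      · change X (Sum.inr i) (Sum.inl c) - E i c = X (Sum.inr i) (Sum.inl l) - E i l
        simp [E, hcl]; ring
  have := Submodule.add_mem_sup ha hb
  rwa [add_sub_cancel] at this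

end HelpersB

/-- for `n ≥ 2` and even `m = 2q`, inside `M_{n,2q}(F)^{(+)}` the
subsuperalgebra `A = osp(n,q)` together with the set `B` of matrices whose `n`-th row is
zero and whose entries in columns `n−1` and `n` agree (off the `n`-th row) gives a
decomposition: `B` is a subsuperalgebra isomorphic to `M_{n−1,m}(F)^{(+)}` and
`A + B = M_{n,m}(F)^{(+)}`. -/
theorem osp_plus_Mn1m_decomposition
    (F : Type*) [Field F] [CharZero F]
    (n q : ℕ) (hn : 2 ≤ n) (hq : 1 ≤ q) :
    ∃ B : Submodule F (MJ F n (2 * q)),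
      (B : Set (MJ F n (2 * q))) =
        {X | (∀ j, X (Sum.inl ⟨n - 1, by omega⟩) j = 0) ∧
          ∀ i, i ≠ Sum.inl ⟨n - 1, by omega⟩ →
            X i (Sum.inl ⟨n - 2, by omega⟩) = X i (Sum.inl ⟨n - 1, by omega⟩)} ∧
      IsSubalg F (ospSub F n q) ∧ IsSubalg F B ∧
      SuperIso F B (⊤ : Submodule F (MJ F (n - 1) (2 * q))) ∧
      ospSub F n q ⊔ B = ⊤ := by
  obtain ⟨k, rfl⟩ : ∃ k, n = k + 2 := ⟨n - 2, by omega⟩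
  refine ⟨BSub F k (2 * q), ?_, ⟨graded_of_odd _ osp_odd, fun x hx y hy => osp_mul x y hx hy⟩,
    ⟨graded_of_odd _ B_odd, fun x hx y hy => B_jmul x y hx hy⟩, B_iso k (2 * q), sum_top k q⟩
  ext X
  constructor
  · rintro ⟨h1, h2⟩
    exact ⟨h1, fun i _ => h2 i⟩
  · rintro ⟨h1, h2⟩
    refine ⟨h1, fun i => ?_⟩
    by_cases h : i = Sum.inl (Fin.last (k + 1))
    · subst h
      exact (h1 _).trans (h1 _).symm
    · exact h2 i h

end SJ
end

section
/- Let F be an algebraically closed field of characteristic zero and t ∈ F with t ≠ 0. Then the superalgebra D_t cannot be written as A + B for two proper nontrivial simple subsuperalgebras A and B. -/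
open Matrix

namespace SJ

section Dt

variable (F : Type*) [Field F]

/-- The superalgebra `D_t = (Fe₁ ⊕ Fe₂) ⊕ (Fx ⊕ Fy)`, realized on `F × F × F × F` with
`e₁ = (1,0,0,0)`, `e₂ = (0,1,0,0)`, `x = (0,0,1,0)`, `y = (0,0,0,1)`.  The product is the
bilinear extension of `eᵢ∘eᵢ = eᵢ`, `e₁∘e₂ = 0`, `eᵢ∘x = x∘eᵢ = x/2`,
`eᵢ∘y = y∘eᵢ = y/2`, `x∘y = −(y∘x) = e₁ + t·e₂`, `x∘x = y∘y = 0`. -/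
def dmul (t : F) (u v : F × F × F × F) : F × F × F × F :=
  (u.1 * v.1 + (u.2.2.1 * v.2.2.2 - u.2.2.2 * v.2.2.1),
   u.2.1 * v.2.1 + t * (u.2.2.1 * v.2.2.2 - u.2.2.2 * v.2.2.1),
   ((u.1 + u.2.1) * v.2.2.1 + (v.1 + v.2.1) * u.2.2.1) / 2,
   ((u.1 + u.2.1) * v.2.2.2 + (v.1 + v.2.1) * u.2.2.2) / 2)

/-- The even part `Fe₁ ⊕ Fe₂` of `D_t`. -/
def dtEven : Submodule F (F × F × F × F) where
  carrier := {u | u.2.2.1 = 0 ∧ u.2.2.2 = 0}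
  zero_mem' := ⟨rfl, rfl⟩
  add_mem' := by
    rintro ⟨a, b, c, d⟩ ⟨a', b', c', d'⟩ ⟨h1, h2⟩ ⟨g1, g2⟩
    constructor <;> simp_all
  smul_mem' := by
    rintro t ⟨a, b, c, d⟩ ⟨h1, h2⟩
    constructor <;> simp_all

/-- The odd part `Fx ⊕ Fy` of `D_t`. -/
def dtOdd : Submodule F (F × F × F × F) where
  carrier := {u | u.1 = 0 ∧ u.2.1 = 0}
  zero_mem' := ⟨rfl, rfl⟩
  add_mem' := by
    rintro ⟨a, b, c, d⟩ ⟨a', b', c', d'⟩ ⟨h1, h2⟩ ⟨g1, g2⟩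
    constructor <;> simp_all
  smul_mem' := by
    rintro t ⟨a, b, c, d⟩ ⟨h1, h2⟩
    constructor <;> simp_all

theorem aux_key {F : Type*} [Field F] (t : F) (A : Submodule F (F × F × F × F))
    (hA : IsSubalgG (dmul F t) (dtEven F) (dtOdd F) A) (hT : A ≠ ⊤)
    (hN : NontrivG (dtOdd F) A)
    (hS : IsSimpleG (dmul F t) (dtEven F) (dtOdd F) A) :
    ∀ u ∈ A, u.2.1 = t * u.1 := by
  obtain ⟨hg, hm⟩ := hA
  obtain ⟨⟨p, hp, q, hq, hpq⟩, hI⟩ := hS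
  have key : ∃ v ∈ A ⊓ dtOdd F, ∃ w ∈ A ⊓ dtOdd F,
      v.2.2.1 * w.2.2.2 - v.2.2.2 * w.2.2.1 ≠ 0 := by
    by_contra hc
    push Not at hc
    have g1 : IsGradedG (dtEven F) (dtOdd F) (A ⊓ dtOdd F) := by
      unfold IsGradedG
      apply le_antisymm
      · exact le_sup_of_le_right (le_inf le_rfl inf_le_right)
      · exact sup_le inf_le_left inf_le_left
    have g2 : ∀ x ∈ A, ∀ y ∈ A ⊓ dtOdd F, dmul F t x y ∈ A ⊓ dtOdd F := by
      intro u hu v hv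
      refine ⟨hm u hu v hv.1, ?_⟩
      have hu' := hu
      rw [hg] at hu'
      obtain ⟨a, ha, b, hb, rfl⟩ := Submodule.mem_sup.1 hu'
      have h0 := hc b hb v hv
      obtain ⟨a1, a2⟩ := ha.2
      obtain ⟨v1, v2⟩ := hv.2
      constructor <;> simp [dmul, a1, a2, v1, v2, h0]
    rcases hI (A ⊓ dtOdd F) inf_le_left g1 g2 with h | h
    · exact hN h
    · rw [← h] at hp hq
      have h0 := hc p hp q hq
      obtain ⟨p1, p2⟩ := hp.2
      obtain ⟨q1, q2⟩ := hq.2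
      apply hpq
      simp [dmul, h0, p1, p2, q1, q2]
  obtain ⟨v, hv, w, hw, hd⟩ := key
  obtain ⟨v1, v2⟩ := hv.2
  obtain ⟨w1, w2⟩ := hw.2
  have hvA := hv.1
  have hwA := hw.1
  obtain ⟨va, vb, vc, vd⟩ := v
  obtain ⟨wa, wb, wc, wd⟩ := w
  simp only at v1 v2 w1 w2 hd
  subst v1 v2 w1 w2
  have hodd : ∀ c d : F, ((0 : F), (0 : F), c, d) ∈ A := by
    intro c d
    have := A.add_mem (A.smul_mem ((c * wd - d * wc) / (vc * wd - vd * wc)) hvA)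
      (A.smul_mem ((vc * d - vd * c) / (vc * wd - vd * wc)) hwA)
    convert this using 1
    ext <;> simp
    · rw [div_mul_eq_mul_div, div_mul_eq_mul_div, ← add_div, eq_div_iff hd]
      ring
    · rw [div_mul_eq_mul_div, div_mul_eq_mul_div, ← add_div, eq_div_iff hd]
      ring
  have hf : ((1 : F), t, (0 : F), (0 : F)) ∈ A := by
    have := hm _ (hodd 1 0) _ (hodd 0 1)
    simpa [dmul] using this
  rintro ⟨a, b, c, d⟩ hu
  by_contra hne
  simp only at hne
  have hne' : b - t * a ≠ 0 := sub_ne_zero.2 hne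
  apply hT
  rw [eq_top_iff]
  rintro ⟨a', b', c', d'⟩ -
  have h2 : ((0 : F), (1 : F), (0 : F), (0 : F)) ∈ A := by
    have := A.smul_mem (b - t * a)⁻¹
      (A.sub_mem (A.sub_mem hu (A.smul_mem a hf)) (hodd c d))
    convert this using 1
    ext <;> simp
    field_simp
  have := A.add_mem (A.add_mem (A.smul_mem a' hf) (A.smul_mem (b' - t * a') h2)) (hodd c' d')
  convert this using 1
  ext <;> simp
  ring

/-- over an algebraically closed field of characteristic zero, for `t ≠ 0`
the superalgebra `D_t` cannot be written as `A + B` for two proper nontrivial simple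
subsuperalgebras `A` and `B`. -/
theorem no_simple_decomposition_Dt
    (F : Type*) [Field F] [IsAlgClosed F] [CharZero F] (t : F) (ht : t ≠ 0) :
    ¬ ∃ A B : Submodule F (F × F × F × F),
        IsSubalgG (dmul F t) (dtEven F) (dtOdd F) A ∧
        IsSubalgG (dmul F t) (dtEven F) (dtOdd F) B ∧
        A ≠ ⊤ ∧ B ≠ ⊤ ∧
        NontrivG (dtOdd F) A ∧ NontrivG (dtOdd F) B ∧
        IsSimpleG (dmul F t) (dtEven F) (dtOdd F) A ∧
        IsSimpleG (dmul F t) (dtEven F) (dtOdd F) B ∧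
        A ⊔ B = ⊤ := by
  rintro ⟨A, B, hA, hB, hAT, hBT, hAN, hBN, hAS, hBS, h⟩
  have kA := aux_key t A hA hAT hAN hAS
  have kB := aux_key t B hB hBT hBN hBS
  have hm : ((0 : F), (1 : F), (0 : F), (0 : F)) ∈ A ⊔ B := by rw [h]; trivial
  obtain ⟨a, ha, b, hb, hab⟩ := Submodule.mem_sup.1 hm
  have h1 := kA a ha
  have h2 := kB b hb
  have e1 : a.1 + b.1 = 0 := congrArg (fun u => u.1) hab
  have e2 : a.2.1 + b.2.1 = 1 := congrArg (fun u => u.2.1) hab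
  rw [h1, h2, ← mul_add, e1, mul_zero] at e2
  exact zero_ne_one e2

end Dt

end SJ
end

section
/- Let F be a field of characteristic zero, let J = J(V,f) be the Jordan superalgebra of a nondegenerate supersymmetric bilinear superform, and let t ∈ F with t ≠ 1. Then there do not exist nonzero elements e₁, e₂ in the even part of J with e₁∘e₁ = e₁, e₂∘e₂ = e₂, e₁∘e₂ = 0, and elements x, y ∈ V₁, such that eᵢ∘x = x/2 and eᵢ∘y = y/2 for i = 1,2 and x∘y = e₁ + t·e₂. (In other words, J(V,f) contains no copy of the superalgebra D_t for t ≠ 1.) -/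
namespace JVF

variable (F : Type*) [Field F]
variable (V0 V1 : Type*) [AddCommGroup V0] [Module F V0] [AddCommGroup V1] [Module F V1]

/-- The product of the Jordan superalgebra `J(V,f) = F·1 ⊕ V₀ ⊕ V₁` of a supersymmetric
bilinear superform (`f = f0 ⊥ f1`, `f0` on `V₀`, `f1` on `V₁`), realized on
`F × V0 × V1`:  `(α·1 + v)∘(β·1 + w) = (αβ + f(v,w))·1 + αw + βv`. -/
def jvf (f0 : V0 →ₗ[F] V0 →ₗ[F] F) (f1 : V1 →ₗ[F] V1 →ₗ[F] F)
    (u v : F × V0 × V1) : F × V0 × V1 :=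
  (u.1 * v.1 + f0 u.2.1 v.2.1 + f1 u.2.2 v.2.2,
   u.1 • v.2.1 + v.1 • u.2.1,
   u.1 • v.2.2 + v.1 • u.2.2)

/-- for `t ≠ 1`, `J(V,f)` contains no copy of the superalgebra `D_t`:
there are no nonzero even orthogonal idempotents `e₁, e₂` and odd elements `x, y` with
`eᵢ∘x = x/2`, `eᵢ∘y = y/2` (`i = 1,2`) and `x∘y = e₁ + t·e₂`. -/
theorem no_Dt_in_JVf
    (F : Type*) [Field F] [CharZero F]
    (V0 V1 : Type*) [AddCommGroup V0] [Module F V0] [FiniteDimensional F V0]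
    [AddCommGroup V1] [Module F V1] [FiniteDimensional F V1]
    (f0 : V0 →ₗ[F] V0 →ₗ[F] F) (hf0s : f0.IsSymm) (hf0n : f0.SeparatingLeft)
    (f1 : V1 →ₗ[F] V1 →ₗ[F] F) (hf1a : f1.IsAlt) (hf1n : f1.SeparatingLeft)
    (t : F) (ht : t ≠ 1) :
    ¬ ∃ (α₁ α₂ : F) (v₁ v₂ : V0) (x y : V1),
        ((α₁, v₁, (0 : V1)) : F × V0 × V1) ≠ 0 ∧
        ((α₂, v₂, (0 : V1)) : F × V0 × V1) ≠ 0 ∧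
        jvf F V0 V1 f0 f1 (α₁, v₁, 0) (α₁, v₁, 0) = (α₁, v₁, 0) ∧
        jvf F V0 V1 f0 f1 (α₂, v₂, 0) (α₂, v₂, 0) = (α₂, v₂, 0) ∧
        jvf F V0 V1 f0 f1 (α₁, v₁, 0) (α₂, v₂, 0) = 0 ∧
        jvf F V0 V1 f0 f1 (α₁, v₁, 0) (0, 0, x) = ((0 : F), (0 : V0), (2 : F)⁻¹ • x) ∧
        jvf F V0 V1 f0 f1 (α₂, v₂, 0) (0, 0, x) = ((0 : F), (0 : V0), (2 : F)⁻¹ • x) ∧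
        jvf F V0 V1 f0 f1 (α₁, v₁, 0) (0, 0, y) = ((0 : F), (0 : V0), (2 : F)⁻¹ • y) ∧
        jvf F V0 V1 f0 f1 (α₂, v₂, 0) (0, 0, y) = ((0 : F), (0 : V0), (2 : F)⁻¹ • y) ∧
        jvf F V0 V1 f0 f1 (0, 0, x) (0, 0, y) =
          (α₁, v₁, (0 : V1)) + t • (α₂, v₂, (0 : V1)) := by
  rintro ⟨α₁, α₂, v₁, v₂, x, y, h1, h2, i1, i2, o, x1, x2, y1, y2, xy⟩
  simp only [jvf, Prod.mk.injEq, Prod.ext_iff, Prod.fst_zero, Prod.snd_zero, Prod.fst_add,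
    Prod.snd_add, Prod.smul_fst, Prod.smul_snd, smul_eq_mul, map_zero, LinearMap.zero_apply,
    smul_zero, add_zero, zero_add, zero_smul, mul_zero, zero_mul, and_true, true_and]
    at i1 i2 o x1 x2 y1 y2 xy
  obtain ⟨i1a, i1b⟩ := i1
  obtain ⟨i2a, i2b⟩ := i2
  obtain ⟨oa, ob⟩ := o
  obtain ⟨xya, xyb⟩ := xy
  by_cases hx : x = 0
  · subst hx
    simp only [map_zero, LinearMap.zero_apply] at xya
    have a1 : α₁ = -(t * α₂) := by linear_combination -xya
    have b1 : v₁ = -(t • v₂) := eq_neg_of_add_eq_zero_left xyb.symm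
    apply h1
    have ha : α₁ = 0 := by
      rw [b1, a1] at oa
      simp only [map_neg, map_smul, LinearMap.neg_apply, LinearMap.smul_apply, smul_eq_mul] at oa
      rw [a1]
      linear_combination oa + t * i2a
    have hb : v₁ = 0 := by
      calc v₁ = -(t • v₂) := b1
        _ = -(t • (α₂ • v₂ + α₂ • v₂)) := by rw [i2b]
        _ = (α₁ • v₂ + α₂ • v₁) := by rw [b1, a1]; module
        _ = 0 := ob
    rw [ha, hb]; rfl
  · have a1 : α₁ = 2⁻¹ := smul_left_injective F hx x1
    have a2 : α₂ = 2⁻¹ := smul_left_injective F hx x2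
    subst a1 a2
    have h2 : (2 : F) ≠ 0 := two_ne_zero
    rw [← smul_add] at ob
    have hs : v₂ + v₁ = 0 := (smul_eq_zero.1 ob).resolve_left (inv_ne_zero h2)
    have hv2 : v₂ = -v₁ := eq_neg_of_add_eq_zero_left hs
    have hz : (1 - t) • v₁ = 0 := by
      rw [hv2] at xyb
      rw [xyb]; module
    have hv : v₁ = 0 := (smul_eq_zero.1 hz).resolve_left (sub_ne_zero.2 ht.symm)
    rw [hv] at i1a
    simp only [map_zero, add_zero] at i1a
    field_simp at i1a
    norm_num at i1a

end JVF
end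

section
/- Let F be a field of characteristic zero, let A be a finite-dimensional associative F-algebra with a ℤ₂-grading A = A₀ ⊕ A₁ (so A_i·A_j ⊆ A_{i+j}), and let J(V,f) be the Jordan superalgebra of a nondegenerate supersymmetric bilinear superform with V₁ ≠ {0}. Then there is no injective F-linear map φ : J(V,f) → A satisfying: φ maps F·1 ⊕ V₀ into A₀ and V₁ into A₁; φ(u∘w) = (φ(u)φ(w) + φ(w)φ(u))/2 whenever u or w lies in the even part of J(V,f); and φ(u∘w) = (φ(u)φ(w) − φ(w)φ(u))/2 whenever u, w ∈ V₁. -/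
namespace JVF

variable (F : Type*) [Field F]
variable (V0 V1 : Type*) [AddCommGroup V0] [Module F V0] [AddCommGroup V1] [Module F V1]

/-- if `V₁ ≠ 0`, there is no injective linear map from `J(V,f)` into a
finite-dimensional associative `F`-algebra `A` with ℤ₂-grading `A = A₀ ⊕ A₁` that maps
`F·1 ⊕ V₀` into `A₀` and `V₁` into `A₁` and turns the super-Jordan product into
`(ab+ba)/2` (when a factor is even) resp. `(ab−ba)/2` (when both factors are odd). -/
theorem no_JVf_in_finite_dimensional_associative
    (F : Type*) [Field F] [CharZero F]
    (V0 V1 : Type*) [AddCommGroup V0] [Module F V0] [FiniteDimensional F V0]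
    [AddCommGroup V1] [Module F V1] [FiniteDimensional F V1]
    (f0 : V0 →ₗ[F] V0 →ₗ[F] F) (hf0s : f0.IsSymm) (hf0n : f0.SeparatingLeft)
    (f1 : V1 →ₗ[F] V1 →ₗ[F] F) (hf1a : f1.IsAlt) (hf1n : f1.SeparatingLeft)
    (hV1 : ∃ x : V1, x ≠ 0)
    (A : Type*) [Ring A] [Algebra F A] [FiniteDimensional F A]
    (A0 A1 : Submodule F A)
    (hsup : A0 ⊔ A1 = ⊤) (hinf : A0 ⊓ A1 = ⊥)
    (h00 : ∀ a ∈ A0, ∀ b ∈ A0, a * b ∈ A0)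
    (h01 : ∀ a ∈ A0, ∀ b ∈ A1, a * b ∈ A1)
    (h10 : ∀ a ∈ A1, ∀ b ∈ A0, a * b ∈ A1)
    (h11 : ∀ a ∈ A1, ∀ b ∈ A1, a * b ∈ A0) :
    ¬ ∃ φ : (F × V0 × V1) →ₗ[F] A,
        Function.Injective φ ∧
        (∀ (α : F) (v : V0), φ (α, v, 0) ∈ A0) ∧
        (∀ x : V1, φ ((0 : F), (0 : V0), x) ∈ A1) ∧
        (∀ u w : F × V0 × V1, u.2.2 = 0 ∨ w.2.2 = 0 →
          φ (jvf F V0 V1 f0 f1 u w) = (2 : F)⁻¹ • (φ u * φ w + φ w * φ u)) ∧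
        (∀ x y : V1,
          φ (jvf F V0 V1 f0 f1 ((0 : F), (0 : V0), x) ((0 : F), (0 : V0), y)) =
            (2 : F)⁻¹ • (φ ((0 : F), (0 : V0), x) * φ ((0 : F), (0 : V0), y) -
              φ ((0 : F), (0 : V0), y) * φ ((0 : F), (0 : V0), x))) := by
  rintro ⟨φ, hinj, -, -, hev, hodd⟩
  obtain ⟨x, hx⟩ := hV1
  have hy : ∃ y, f1 x y ≠ 0 := by
    by_contra h
    push Not at h
    exact hx (hf1n x h)
  obtain ⟨y, hy⟩ := hy
  set e : A := φ (1, 0, 0) with he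
  have e0 : e ≠ 0 := by
    intro h
    have h2 := hinj (h.trans (map_zero φ).symm)
    simp at h2
  have ee : e * e = e := by
    have h := hev (1, 0, 0) (1, 0, 0) (Or.inl rfl)
    simp only [jvf, mul_one, map_zero, add_zero, smul_zero, ← he] at h
    rw [← two_smul F (e * e), smul_smul, inv_mul_cancel₀ two_ne_zero, one_smul] at h
    exact h.symm
  have h := hodd x y
  have h1 : jvf F V0 V1 f0 f1 ((0 : F), (0 : V0), x) ((0 : F), (0 : V0), y)
      = f1 x y • ((1, 0, 0) : F × V0 × V1) := by
    simp [jvf]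
  rw [h1, map_smul, ← he] at h
  have ht : LinearMap.trace F A (LinearMap.mulLeft F e) = 0 := by
    have h2 := congrArg (fun a => LinearMap.trace F A (Algebra.lmul F A a)) h
    simp only [map_smul, map_sub, map_mul] at h2
    rw [LinearMap.trace_mul_comm, sub_self, smul_zero, smul_eq_mul] at h2
    exact (mul_eq_zero.mp h2).resolve_left hy
  have hp : LinearMap.IsProj (LinearMap.range (LinearMap.mulLeft F e)) (LinearMap.mulLeft F e) := by
    refine ⟨fun a => ⟨a, rfl⟩, ?_⟩
    rintro _ ⟨a, rfl⟩
    simp [← mul_assoc, ee]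
  rw [hp.trace, Nat.cast_eq_zero, Submodule.finrank_eq_zero, LinearMap.range_eq_bot] at ht
  apply e0
  have := LinearMap.congr_fun ht 1
  simpa using this

end JVF
end

section
/- Let A be a finite-dimensional associative algebra over a field F of characteristic zero, let e ∈ A be an idempotent (e·e = e), let c ∈ F be nonzero, and suppose there exist x, y ∈ A with x·y − y·x = c·e. Then e = 0. -/
/-- in a finite-dimensional associative (not necessarily unital) algebra
over a field of characteristic zero, an idempotent which is a nonzero scalar multiple of
a commutator `x·y − y·x` must be zero. -/
theorem idempotent_eq_zero_of_commutator
    (F : Type*) [Field F] [CharZero F]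
    (A : Type*) [NonUnitalRing A] [Module F A]
    [SMulCommClass F A A] [IsScalarTower F A A] [FiniteDimensional F A]
    (e : A) (he : e * e = e) (c : F) (hc : c ≠ 0)
    (x y : A) (h : x * y - y * x = c • e) : e = 0 := by
  have hxy : LinearMap.mulLeft F x * LinearMap.mulLeft F y
      - LinearMap.mulLeft F y * LinearMap.mulLeft F x = c • LinearMap.mulLeft F e := by
    ext a
    have := congrArg (· * a) h
    simpa [sub_mul, mul_assoc, smul_mul_assoc] using this
  have ht : LinearMap.trace F A (LinearMap.mulLeft F e) = 0 := by
    have := congrArg (LinearMap.trace F A) hxy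
    rw [map_sub, LinearMap.trace_mul_comm, sub_self, map_smul, smul_eq_mul] at this
    exact (mul_eq_zero.mp this.symm).resolve_left hc
  have hp : LinearMap.IsProj (LinearMap.range (LinearMap.mulLeft F e))
      (LinearMap.mulLeft F e) := by
    refine ⟨fun a => LinearMap.mem_range_self _ a, ?_⟩
    rintro _ ⟨a, rfl⟩
    simp [← mul_assoc, he]
  rw [hp.trace, Nat.cast_eq_zero, Submodule.finrank_eq_zero, LinearMap.range_eq_bot] at ht
  have := LinearMap.congr_fun ht e
  simpa [he] using this
end

section
/- Let F be an algebraically closed field of characteristic zero and let 1 ≤ m < n. Suppose φ is an injective F-linear map from the space of symmetric m×m matrices over F into the space of symmetric n×n matrices over F such that φ(I_m) = I_n and φ(XY + YX) = φ(X)φ(Y) + φ(Y)φ(X) for all symmetric m×m matrices X, Y. Then 2m ≤ n. -/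
open Matrix

namespace HFn

variable (F : Type*) [Field F]

/-- `H(F_k)`: the space of symmetric `k×k` matrices over `F`. -/
def symSub (k : ℕ) : Submodule F (Matrix (Fin k) (Fin k) F) where
  carrier := {X | Xᵀ = X}
  zero_mem' := Matrix.transpose_zero
  add_mem' := by
    intro a b (ha : aᵀ = a) (hb : bᵀ = b)
    show (a + b)ᵀ = a + b
    rw [Matrix.transpose_add, ha, hb]
  smul_mem' := by
    intro c a (ha : aᵀ = a)
    show (c • a)ᵀ = c • a
    rw [Matrix.transpose_smul, ha]

/-- for `1 ≤ m < n`, a unital Jordan embedding of `H(F_m)` into `H(F_n)`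
(an injective linear map sending `I` to `I` with `φ(XY+YX) = φ(X)φ(Y)+φ(Y)φ(X)`) forces
`2m ≤ n`. -/
theorem unital_jordan_embedding_symmetric_matrices
    (F : Type*) [Field F] [IsAlgClosed F] [CharZero F]
    (m n : ℕ) (hm : 1 ≤ m) (hmn : m < n)
    (φ : symSub F m →ₗ[F] symSub F n)
    (hinj : Function.Injective φ)
    (hone : (φ ⟨1, Matrix.transpose_one⟩ : Matrix (Fin n) (Fin n) F) = 1)
    (hmul : ∀ X Y Z : symSub F m,
      (Z : Matrix (Fin m) (Fin m) F) = (X : Matrix (Fin m) (Fin m) F) * Y + (Y : Matrix (Fin m) (Fin m) F) * X →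
      (φ Z : Matrix (Fin n) (Fin n) F) = (φ X : Matrix (Fin n) (Fin n) F) * φ Y + (φ Y : Matrix (Fin n) (Fin n) F) * φ X) :
    2 * m ≤ n := by
  classical
  have hidem : ∀ P : Matrix (Fin n) (Fin n) F, P * P = P → ∃ r : ℕ, P.trace = r := by
    intro P hP
    have h1 : IsIdempotentElem (Matrix.toLin' P) := by
      show Matrix.toLin' P * Matrix.toLin' P = _
      rw [Module.End.mul_eq_comp, ← Matrix.toLin'_mul, hP]
    have h2 := LinearMap.IsIdempotentElem.isProj_range _ h1
    exact ⟨_, by rw [← Matrix.trace_toLin'_eq, h2.trace]⟩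
  let E : Fin m → symSub F m := fun i => ⟨Matrix.single i i 1, by
    show (Matrix.single i i (1:F))ᵀ = _
    simp⟩
  let A : Fin m → Fin m → symSub F m := fun i j => ⟨Matrix.single i j 1 + Matrix.single j i 1, by
    show (Matrix.single i j (1:F) + Matrix.single j i 1)ᵀ = _
    simp [add_comm]⟩
  have hEE : ∀ i, (φ (E i) : Matrix (Fin n) (Fin n) F) * φ (E i) = φ (E i) := by
    intro i
    have := hmul (E i) (E i) ((2:F) • E i) (by simp [E, two_smul])
    rw [map_smul, Submodule.coe_smul, ← two_smul F] at this
    exact (smul_right_injective _ (two_ne_zero (α := F)) this).symm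
  have htr : ∀ i j, (φ (E i) : Matrix (Fin n) (Fin n) F).trace
      = (φ (E j) : Matrix (Fin n) (Fin n) F).trace := by
    intro i j
    by_cases hij : i = j
    · rw [hij]
    have hji : j ≠ i := fun h => hij h.symm
    have h1 := hmul (E i) (E j) 0 (by simp [E, hij, hji])
    have h2 := hmul (A i j) (A i j) ((2:F) • (E i + E j)) (by
      simp [E, A, hij, hji, mul_add, add_mul, two_smul]; abel)
    have h3 := hmul (E i) (A i j) (A i j) (by
      simp [E, A, hij, hji, mul_add, add_mul])
    rw [map_smul, map_add, Submodule.coe_smul, Submodule.coe_add, ← two_smul F] at h2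
    have h2 := smul_right_injective _ (two_ne_zero (α := F)) h2
    simp only [map_zero, ZeroMemClass.coe_zero] at h1
    have hi := hEE i
    generalize (φ (E i) : Matrix (Fin n) (Fin n) F) = P at *
    generalize (φ (E j) : Matrix (Fin n) (Fin n) F) = Q at *
    generalize (φ (A i j) : Matrix (Fin n) (Fin n) F) = B at *
    have t1 := congrArg Matrix.trace h1
    rw [Matrix.trace_zero, Matrix.trace_add, Matrix.trace_mul_comm Q P] at t1
    have t2 := congrArg (fun X => Matrix.trace (X * B)) h3
    simp only [add_mul, Matrix.trace_add] at t2
    rw [Matrix.trace_mul_comm (B * P) B, ← mul_assoc B B P, mul_assoc P B B, ← h2,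
      mul_add, add_mul, hi] at t2
    simp only [Matrix.trace_add] at t2
    rw [Matrix.trace_mul_comm Q P] at t2
    linear_combination t1 - t2
  have hsum : ∑ i, (φ (E i) : Matrix (Fin n) (Fin n) F) = 1 := by
    rw [← hone, ← Submodule.coe_sum, ← map_sum]
    congr 2
    apply Subtype.ext
    rw [Submodule.coe_sum]
    exact Matrix.sum_single_one
  have hsum := congrArg Matrix.trace hsum
  obtain ⟨r, hr⟩ := hidem _ (hEE ⟨0, hm⟩)
  rw [Matrix.trace_sum, Finset.sum_congr rfl (fun i _ => (htr i ⟨0, hm⟩).trans hr)] at hsum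
  simp at hsum
  have hn : m * r = n := by exact_mod_cast hsum
  have : 2 ≤ r := by
    by_contra h
    have : r ≤ 1 := by omega
    nlinarith
  nlinarith

end HFn
end

section
/- Let F be an algebraically closed field of characteristic zero and let 1 ≤ m < n. Suppose φ is an injective F-linear map from the full matrix algebra M_m(F) into M_n(F) such that φ(I_m) = I_n and φ(XY + YX) = φ(X)φ(Y) + φ(Y)φ(X) for all X, Y ∈ M_m(F). Then 2m ≤ n. -/
theorem jordan_sq {F : Type*} [Field F] [CharZero F] {m n : ℕ}
    (φ : Matrix (Fin m) (Fin m) F →ₗ[F] Matrix (Fin n) (Fin n) F)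
    (hmul : ∀ X Y : Matrix (Fin m) (Fin m) F,
      φ (X * Y + Y * X) = φ X * φ Y + φ Y * φ X) (X : Matrix (Fin m) (Fin m) F) :
    φ (X * X) = φ X * φ X := by
  have h := hmul X X
  rw [map_add, ← two_smul F, ← two_smul F (φ X * φ X)] at h
  exact smul_right_injective _ (two_ne_zero (α := F)) h

theorem jordan_triple {F : Type*} [Field F] [CharZero F] {m n : ℕ}
    (φ : Matrix (Fin m) (Fin m) F →ₗ[F] Matrix (Fin n) (Fin n) F)
    (hmul : ∀ X Y : Matrix (Fin m) (Fin m) F,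
      φ (X * Y + Y * X) = φ X * φ Y + φ Y * φ X) (X Y : Matrix (Fin m) (Fin m) F) :
    φ (X * Y * X) = φ X * φ Y * φ X := by
  have h1 := hmul X (X * Y + Y * X)
  have h2 := hmul (X * X) Y
  rw [hmul X Y] at h1
  rw [jordan_sq φ hmul] at h2
  have e : X * (X * Y + Y * X) + (X * Y + Y * X) * X
      = (X * X * Y + Y * (X * X)) + (2 : F) • (X * Y * X) := by
    rw [two_smul]; noncomm_ring
  rw [e, map_add, h2, map_smul] at h1
  have h3 : (2 : F) • φ (X * Y * X) = (2 : F) • (φ X * φ Y * φ X) := by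
    rw [← sub_eq_zero] at h1 ⊢
    rw [← h1, two_smul, two_smul]; noncomm_ring
  exact smul_right_injective _ (two_ne_zero (α := F)) h3

theorem trace_idem_nat {F : Type*} [Field F] {n : ℕ}
    (A : Matrix (Fin n) (Fin n) F) (h : A * A = A) : ∃ r : ℕ, A.trace = r := by
  have h' : IsIdempotentElem (Matrix.toLin' A) := by
    unfold IsIdempotentElem
    rw [Module.End.mul_eq_comp, ← Matrix.toLin'_mul, h]
  refine ⟨Module.finrank F (LinearMap.range (Matrix.toLin' A)), ?_⟩
  rw [← Matrix.trace_toLin'_eq]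
  exact (LinearMap.IsIdempotentElem.isProj_range _ h').trace

/-- for `1 ≤ m < n`, a unital Jordan embedding of `M_m(F)^{(+)}` into
`M_n(F)^{(+)}` (an injective linear map sending `I` to `I` with
`φ(XY+YX) = φ(X)φ(Y)+φ(Y)φ(X)`) forces `2m ≤ n`. -/
theorem unital_jordan_embedding_full_matrices
    (F : Type*) [Field F] [IsAlgClosed F] [CharZero F]
    (m n : ℕ) (hm : 1 ≤ m) (hmn : m < n)
    (φ : Matrix (Fin m) (Fin m) F →ₗ[F] Matrix (Fin n) (Fin n) F)
    (hinj : Function.Injective φ)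
    (hone : φ 1 = 1)
    (hmul : ∀ X Y : Matrix (Fin m) (Fin m) F,
      φ (X * Y + Y * X) = φ X * φ Y + φ Y * φ X) :
    2 * m ≤ n := by
  let i0 : Fin m := ⟨0, hm⟩
  obtain ⟨r, hr⟩ := trace_idem_nat (φ (Matrix.single i0 i0 1)) (by
    rw [← jordan_sq φ hmul]; simp)
  have key : ∀ j : Fin m, (φ (Matrix.single j j 1)).trace = r := by
    intro j
    have hPP : Matrix.swap F i0 j * Matrix.swap F i0 j = 1 := by
      rw [Matrix.swap, ← Matrix.permMatrix_mul, Equiv.swap_mul_self, Matrix.permMatrix_one]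
    have hP : Matrix.swap F i0 j * Matrix.single i0 i0 1 * Matrix.swap F i0 j
        = Matrix.single j j 1 := by
      ext a b
      simp only [Matrix.swap, Equiv.Perm.permMatrix,
        PEquiv.toMatrix_toPEquiv_mul, PEquiv.mul_toMatrix_toPEquiv, Matrix.submatrix_apply,
        Matrix.single_apply, Equiv.symm_swap, id, eq_comm (a := i0), Equiv.swap_apply_eq_iff,
        Equiv.swap_apply_left, eq_comm (a := j)]
    rw [← hP, jordan_triple φ hmul, Matrix.trace_mul_comm, ← mul_assoc, ← jordan_sq φ hmul, hPP,
      hone, one_mul, hr]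
  have hs : (1 : Matrix (Fin m) (Fin m) F) = ∑ j, Matrix.single j j 1 := by
    exact (Matrix.sum_single_one).symm
  have hn : (n : F) = m * r := by
    have := congrArg Matrix.trace hone
    rw [hs, map_sum, Matrix.trace_sum, Finset.sum_congr rfl (fun j _ => key j)] at this
    simpa using this.symm
  have hn' : n = m * r := by exact_mod_cast hn
  have : 2 ≤ r := by
    by_contra hlt
    have : r ≤ 1 := by omega
    nlinarith
  nlinarith
end
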